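/- Let e be a finite nonempty set, let V_j be a finite nonempty set for each j ∈ e, and let V_e := ∏_{j∈e} V_j. Then for any function ν : V_e → ℝ and any collection of subsets B_f ⊆ V_f for f ∈ ∂e, the quantity E[∏_{ω∈{0,1}^e} (ν(x_e^{(ω)}) − 1) | x_e^{(0)}, x_e^{(1)} ∈ V_e] is nonnegative and |E[(ν(x_e) − 1)·∏_{f∈∂e} 1_{B_f}(x_f) | x_e ∈ V_e]| ≤ E[∏_{ω∈{0,1}^e} (ν(x_e^{(ω)}) − 1) | x_e^{(0)}, x_e^{(1)} ∈ V_e]^{1/2^{|e|}}. -/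

import Mathlib

open Finset

/-- The average (expectation with respect to the uniform measure) of `f` over `α`. -/
noncomputable def avg {α : Type*} [Fintype α] (f : α → ℝ) : ℝ :=
  (∑ x, f x) / (Fintype.card α)

/-!
Duplicate the coordinates one at a time, and call the average in which only the coordinates in `S`
are duplicated the partial box average over `S`. Suppose that `i ∉ S`, and that the factor `b` is
bounded by one and does not depend on `x i`. In the partial box average of `b * G` over `S` the
contribution of `b` is then constant along `x i`, so Cauchy–Schwarz in the remaining variables
removes it at the cost of squaring the average of `G` over `x i`, that is, of duplicating this
variable: the square of the average is at most the partial box average of `G` over `insert i S`.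
Each face avoids one coordinate, so duplicating all coordinates in turn removes all the indicators.
-/

open scoped BigOperators

lemma avg_eq_expect {α : Type*} [Fintype α] (f : α → ℝ) : avg f = 𝔼 x, f x :=
  (Fintype.expect_eq_sum_div_card f).symm

section Expect

variable {α : Type*} [Fintype α] {R : Type*} [CommRing R] [LinearOrder R] [IsStrictOrderedRing R]
  [Module ℚ≥0 R] [PosSMulMono ℚ≥0 R]

lemma sq_expect_mul_le_expect_sq [Nonempty α] {b : α → R} (hb : ∀ x, |b x| ≤ 1) (f : α → R) :
    (𝔼 x, b x * f x) ^ 2 ≤ 𝔼 x, f x ^ 2 := by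
  have hb_sq : 𝔼 x, b x ^ 2 ≤ 1 :=
    expect_le univ_nonempty fun x _ => (sq_le_one_iff_abs_le_one _).2 (hb x)
  exact (expect_mul_sq_le_sq_mul_sq univ b f).trans
    (mul_le_of_le_one_left (expect_nonneg fun x _ => sq_nonneg (f x)) hb_sq)

lemma sq_expect_le_expect_sq [Nonempty α] (f : α → R) : (𝔼 x, f x) ^ 2 ≤ 𝔼 x, f x ^ 2 := by
  simpa using sq_expect_mul_le_expect_sq (b := 1) (by simp) f

end Expect

section Coordinates

variable {ι : Type*} [DecidableEq ι] {V : ι → Type*} {β : Type*}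

lemma dependsOn_comp_piecewise {f : (∀ j, V j) → β} {s : Set ι} (hf : DependsOn f s)
    (T : Finset ι) (y : ∀ j, V j) : DependsOn (fun x => f (T.piecewise y x)) s := by
  intro x x' h
  refine hf fun j hj => ?_
  by_cases hT : j ∈ T <;> simp [hT, h j hj]

lemma apply_update_of_dependsOn_compl {f : (∀ j, V j) → β} {i : ι} (hf : DependsOn f {i}ᶜ)
    (x : ∀ j, V j) (t : V i) : f (Function.update x i t) = f x :=
  hf fun _ hj => Function.update_of_ne hj _ _

section BoxProd

variable {M : Type*} [CommMonoid M]

/-- The product of `G` over the vertices of the box spanned by `x` and `y` in the directions of `S`: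
the vertex indexed by `T ⊆ S` agrees with `y` on `T` and with `x` off `T`. -/
def boxProd (S : Finset ι) (G : (∀ j, V j) → M) (x y : ∀ j, V j) : M :=
  ∏ T ∈ S.powerset, G (T.piecewise y x)

lemma boxProd_insert {S : Finset ι} {i : ι} (hi : i ∉ S) (G : (∀ j, V j) → M)
    (x y : ∀ j, V j) :
    boxProd (insert i S) G x y =
      boxProd S G x y * boxProd S G (Function.update x i (y i)) y := by
  rw [boxProd, prod_powerset_insert hi]
  congr 1
  refine prod_congr rfl fun T hT => ?_
  rw [piecewise_insert, update_piecewise_of_notMem _ _ _ fun h => hi (mem_powerset.1 hT h)]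

lemma dependsOn_boxProd_left {s : Set ι} {G : (∀ j, V j) → M} (hG : DependsOn G s)
    (S : Finset ι) (y : ∀ j, V j) : DependsOn (fun x => boxProd S G x y) s :=
  fun _ _ h => prod_congr rfl fun T _ => dependsOn_comp_piecewise hG T y h

lemma dependsOn_boxProd_right (S : Finset ι) (G : (∀ j, V j) → M) (x : ∀ j, V j) :
    DependsOn (fun y => boxProd S G x y) S :=
  fun _ _ h => prod_congr rfl fun T hT => congrArg G <|
    T.piecewise_congr (fun j hj => h j (mem_powerset.1 hT hj)) fun _ _ => rfl

lemma boxProd_mul (S : Finset ι) (G H : (∀ j, V j) → M) (x y : ∀ j, V j) :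
    boxProd S (fun z => G z * H z) x y = boxProd S G x y * boxProd S H x y :=
  prod_mul_distrib

end BoxProd

lemma abs_boxProd_le_one {R : Type*} [CommRing R] [LinearOrder R] [IsStrictOrderedRing R]
    (S : Finset ι) {G : (∀ j, V j) → R} (hG : ∀ x, |G x| ≤ 1) (x y : ∀ j, V j) :
    |boxProd S G x y| ≤ 1 := by
  rw [boxProd, abs_prod]
  exact prod_le_one (fun _ _ => abs_nonneg _) fun _ _ => hG _

variable [Fintype ι] [∀ j, Fintype (V j)]

section Resample

variable {M : Type*} [AddCommMonoid M] [Module ℚ≥0 M]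

lemma expect_expect_update (i : ι) [Nonempty (V i)] (f : (∀ j, V j) → M) :
    𝔼 x, 𝔼 t : V i, f (Function.update x i t) = 𝔼 x, f x := by
  have hswap : Function.Involutive fun p : (∀ j, V j) × V i =>
      (Function.update p.1 i p.2, p.1 i) := fun p => by simp
  calc 𝔼 x, 𝔼 t : V i, f (Function.update x i t)
      = 𝔼 p : (∀ j, V j) × V i, f (Function.update p.1 i p.2) :=
        (expect_product' univ univ fun x t => f (Function.update x i t)).symm
    _ = 𝔼 p : (∀ j, V j) × V i, f p.1 :=
        Fintype.expect_equiv hswap.toPerm _ _ fun _ => rfl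
    _ = 𝔼 x, 𝔼 _t : V i, f x := expect_product' univ univ fun x _ => f x
    _ = 𝔼 x, f x := by simp only [Fintype.expect_const]

lemma expect_apply_of_dependsOn_compl {i : ι} [Nonempty (V i)] {φ : V i → (∀ j, V j) → M}
    (hφ : ∀ t, DependsOn (φ t) {i}ᶜ) : 𝔼 x, φ (x i) x = 𝔼 x, 𝔼 t, φ t x := by
  rw [← expect_expect_update i]
  simp only [Function.update_self, apply_update_of_dependsOn_compl (hφ _)]

end Resample

lemma expect_sq_expect_update {R : Type*} [CommSemiring R] [Module ℚ≥0 R] (i : ι)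
    [Nonempty (V i)] (f : (∀ j, V j) → R) :
    𝔼 x, (𝔼 t : V i, f (Function.update x i t)) ^ 2 =
      𝔼 x, 𝔼 t : V i, f x * f (Function.update x i t) := by
  rw [← expect_expect_update i fun x => 𝔼 t : V i, f x * f (Function.update x i t)]
  simp only [Function.update_idem, sq, Fintype.expect_mul_expect]

section BoxExpect

variable {R : Type*} [CommSemiring R] [Module ℚ≥0 R]

/-- The partial box average of `G`, in which only the coordinates in `S` are duplicated. It
interpolates between the average of `G` at `S = ∅` and the `2 ^ |ι|`-th power of its box norm at
`S = univ`. The coordinates of `y` outside `S` are dummy variables. -/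
def boxExpect (S : Finset ι) (G : (∀ j, V j) → R) : R :=
  𝔼 y, 𝔼 x, boxProd S G x y

lemma boxExpect_empty [∀ j, Nonempty (V j)] (G : (∀ j, V j) → R) :
    boxExpect ∅ G = 𝔼 x, G x := by
  simp [boxExpect, boxProd]

lemma boxExpect_univ (G : (∀ j, V j) → R) :
    boxExpect univ G = 𝔼 p : (∀ j, V j) × (∀ j, V j),
      ∏ ω : ι → Bool, G fun j => if ω j then p.2 j else p.1 j := by
  rw [boxExpect, expect_comm, ← expect_product']
  refine expect_congr rfl fun p _ => ?_
  rw [boxProd, powerset_univ]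
  exact prod_nbij' (fun T j => decide (j ∈ T)) (fun ω => ({j | ω j} : Finset ι))
    (by simp) (by simp) (by simp) (by simp)
    fun T _ => congrArg G (funext fun j => by simp [piecewise])

lemma boxExpect_insert {S : Finset ι} {i : ι} [Nonempty (V i)] (hi : i ∉ S)
    (G : (∀ j, V j) → R) :
    boxExpect (insert i S) G =
      𝔼 y, 𝔼 x, 𝔼 t : V i, boxProd S G x y * boxProd S G (Function.update x i t) y := by
  have hdep (x : ∀ j, V j) : DependsOn (fun y => boxProd S G x y) {i}ᶜ :=
    (dependsOn_boxProd_right S G x).mono fun _ hj => ne_of_mem_of_not_mem hj hi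
  simp only [boxExpect, boxProd_insert hi]
  rw [expect_apply_of_dependsOn_compl
    (φ := fun t y => 𝔼 x, boxProd S G x y * boxProd S G (Function.update x i t) y)
    fun t y y' h => expect_congr rfl fun x _ => congrArg₂ _ (hdep _ h) (hdep _ h)]
  exact expect_congr rfl fun y _ => expect_comm _ _ _

end BoxExpect

section CauchySchwarz

variable {R : Type*} [CommRing R] [LinearOrder R] [IsStrictOrderedRing R]
  [Module ℚ≥0 R] [PosSMulMono ℚ≥0 R]

lemma sq_expect_mul_le_expect_mul_update [∀ j, Nonempty (V j)] {i : ι} {b : (∀ j, V j) → R}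
    (hb : DependsOn b {i}ᶜ) (hb_le : ∀ x, |b x| ≤ 1) (f : (∀ j, V j) → R) :
    (𝔼 x, b x * f x) ^ 2 ≤ 𝔼 x, 𝔼 t : V i, f x * f (Function.update x i t) := by
  calc (𝔼 x, b x * f x) ^ 2
      = (𝔼 x, b x * 𝔼 t : V i, f (Function.update x i t)) ^ 2 := by
        rw [← expect_expect_update i]
        simp only [apply_update_of_dependsOn_compl hb, mul_expect]
    _ ≤ 𝔼 x, (𝔼 t : V i, f (Function.update x i t)) ^ 2 := sq_expect_mul_le_expect_sq hb_le _
    _ = 𝔼 x, 𝔼 t : V i, f x * f (Function.update x i t) := expect_sq_expect_update i f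

lemma sq_boxExpect_mul_le_boxExpect_insert [∀ j, Nonempty (V j)] {S : Finset ι} {i : ι}
    (hi : i ∉ S) {b : (∀ j, V j) → R} (hb : DependsOn b {i}ᶜ) (hb_le : ∀ x, |b x| ≤ 1)
    (G : (∀ j, V j) → R) :
    boxExpect S (fun x => b x * G x) ^ 2 ≤ boxExpect (insert i S) G := by
  calc boxExpect S (fun x => b x * G x) ^ 2
      = (𝔼 y, 𝔼 x, boxProd S b x y * boxProd S G x y) ^ 2 := by
        simp only [boxExpect, boxProd_mul]
    _ ≤ 𝔼 y, (𝔼 x, boxProd S b x y * boxProd S G x y) ^ 2 := sq_expect_le_expect_sq _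
    _ ≤ 𝔼 y, 𝔼 x, 𝔼 t : V i, boxProd S G x y * boxProd S G (Function.update x i t) y :=
        expect_le_expect fun y _ => sq_expect_mul_le_expect_mul_update
          (dependsOn_boxProd_left hb S y) (fun x => abs_boxProd_le_one S hb_le x y) _
    _ = boxExpect (insert i S) G := (boxExpect_insert hi G).symm

lemma boxExpect_nonneg [∀ j, Nonempty (V j)] {S : Finset ι} (hS : S.Nonempty)
    (G : (∀ j, V j) → R) : 0 ≤ boxExpect S G := by
  obtain ⟨i, hi⟩ := hS
  rw [← insert_erase hi]
  exact (sq_nonneg _).trans <| sq_boxExpect_mul_le_boxExpect_insert (b := fun _ => 1)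
    (notMem_erase i S) (fun _ _ _ => rfl) (by simp) G

lemma abs_expect_prod_mul_pow_le_abs_boxExpect [∀ j, Nonempty (V j)]
    {b : ι → (∀ j, V j) → R} (hb : ∀ j, DependsOn (b j) {j}ᶜ) (hb_le : ∀ j x, |b j x| ≤ 1)
    (S : Finset ι) (G : (∀ j, V j) → R) :
    |𝔼 x, (∏ j ∈ S, b j x) * G x| ^ 2 ^ #S ≤ |boxExpect S G| := by
  induction S using Finset.induction_on generalizing G with
  | empty => simp [boxExpect_empty]
  | insert i S hi ih =>
    calc |𝔼 x, (∏ j ∈ insert i S, b j x) * G x| ^ 2 ^ #(insert i S)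
        = (|𝔼 x, (∏ j ∈ S, b j x) * (b i x * G x)| ^ 2 ^ #S) ^ 2 := by
          rw [card_insert_of_notMem hi, pow_succ, pow_mul]
          simp only [prod_insert hi, mul_assoc, mul_left_comm]
      _ ≤ |boxExpect S fun x => b i x * G x| ^ 2 := by gcongr; exact ih _
      _ = boxExpect S (fun x => b i x * G x) ^ 2 := sq_abs _
      _ ≤ boxExpect (insert i S) G :=
          sq_boxExpect_mul_le_boxExpect_insert hi (hb i) (hb_le i) G
      _ ≤ |boxExpect (insert i S) G| := le_abs_self _

end CauchySchwarz

theorem gowers_cauchy_schwarz_general [Nonempty ι] [∀ j, Nonempty (V j)] (F : (∀ j, V j) → ℝ)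
    (b : ι → (∀ j, V j) → ℝ) (hb : ∀ j, DependsOn (b j) {j}ᶜ) (hb_le : ∀ j x, |b j x| ≤ 1) :
    0 ≤ avg (fun x : (∀ j, V j) × (∀ j, V j) =>
        ∏ ω : ι → Bool, F fun j => if ω j then x.2 j else x.1 j) ∧
      |avg fun x => F x * ∏ j, b j x| ≤
        avg (fun x : (∀ j, V j) × (∀ j, V j) =>
          ∏ ω : ι → Bool, F fun j => if ω j then x.2 j else x.1 j) ^
            ((1 : ℝ) / 2 ^ Fintype.card ι) := by
  simp only [avg_eq_expect, ← boxExpect_univ, mul_comm (F _)]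
  have hbox : 0 ≤ boxExpect univ F := boxExpect_nonneg univ_nonempty F
  have hpow : |𝔼 x, (∏ j, b j x) * F x| ^ 2 ^ Fintype.card ι ≤ boxExpect univ F := by
    simpa only [abs_of_nonneg hbox, card_univ] using
      abs_expect_prod_mul_pow_le_abs_boxExpect hb hb_le univ F
  refine ⟨hbox, ?_⟩
  rw [one_div, Real.le_rpow_inv_iff_of_pos (abs_nonneg _) hbox (by positivity)]
  exact_mod_cast hpow

end Coordinates

/-- **Gowers–Cauchy–Schwarz for the box norm.** Let `e` be a finite nonempty set (here a
finite nonempty type `ι`) and `V_j` finite nonempty sets for `j ∈ e`. For any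
`ν : V_e → ℝ` and any sets `B_f ⊆ V_f` indexed by the faces `f = e ∖ {j}` of `e`, the
box-norm quantity `E[∏_{ω ∈ {0,1}^e} (ν(x_e^{(ω)}) - 1)]` is nonnegative and
`|E[(ν(x_e) - 1) ∏_{f ∈ ∂e} 1_{B_f}(x_f)]|
  ≤ E[∏_{ω ∈ {0,1}^e} (ν(x_e^{(ω)}) - 1)]^{1/2^{|e|}}`. -/
theorem gowers_cauchy_schwarz (ι : Type) [Fintype ι] [DecidableEq ι] [Nonempty ι]
    (V : ι → Type) [∀ j, Fintype (V j)] [∀ j, Nonempty (V j)]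
    (ν : ((j : ι) → V j) → ℝ)
    (B : (j : ι) → Set ((i : {i : ι // i ≠ j}) → V i.1)) :
    0 ≤ avg (fun x : ((j : ι) → V j) × ((j : ι) → V j) =>
        ∏ ω : ι → Bool, (ν (fun j => if ω j then x.2 j else x.1 j) - 1)) ∧
    |avg (fun x : (j : ι) → V j =>
        (ν x - 1) * ∏ j : ι,
          Set.indicator (B j) (fun _ => (1 : ℝ)) (fun i : {i : ι // i ≠ j} => x i.1))| ≤
      (avg (fun x : ((j : ι) → V j) × ((j : ι) → V j) =>
        ∏ ω : ι → Bool, (ν (fun j => if ω j then x.2 j else x.1 j) - 1))) ^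
          ((1 : ℝ) / 2 ^ Fintype.card ι) :=
  gowers_cauchy_schwarz_general (fun x => ν x - 1) _
    (fun j _ _ h => congrArg ((B j).indicator fun _ => 1) (funext fun i => h i i.2))
    fun _ _ => (norm_indicator_le_norm_self (fun _ => (1 : ℝ)) _).trans_eq norm_one
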